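/- Parabolic energy estimates for super-caloric functions: let I = [s₁,s₂] ⊂ ℝ, let B ⊂ V be a finite connected set, let η : V → ℝ satisfy η = 0 outside B, 0 ≤ η ≤ 1 and η ≡ 0 on ∂B, let K ≥ 1 satisfy η(y)² ≤ K·η(x)² for every {x,y} ∈ E with η(x) ≠ 0, and let ζ : ℝ → [0,1] be continuously differentiable with ζ = 0 outside I and ζ(s₂) = 0. Let u : I × V → (0,∞) be super-caloric on I × B. Then for every α ∈ (0,1/2): (a) ∫_I ζ(t)·E^ω_{η²}(u(t,·)^α)/|B| dt ≤ (8/(1−2α)²)·(K·‖∇η‖²_{ℓ∞(E)} + sup_{t∈I}|ζ′(t)|)·∫_I ‖u(t,·)^{2α}‖_{1,B,μ^ω} dt; and (b) max_{t∈I} ζ(t)·‖(η·u(t,·)^α)²‖_{1,B,μ^ω} ≤ (16/(1−2α))·(K·‖∇η‖²_{ℓ∞(E)} + sup_{t∈I}|ζ′(t)|)·∫_I ‖u(t,·)^{2α}‖_{1,B,μ^ω} dt. -/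

import Mathlib

open Finset MeasureTheory
open scoped ENNReal

noncomputable section

namespace RCM

variable {V : Type*}

/-- `μ^ω(x)`, the sum of the weights of edges incident to `x`. -/
def mu (nbr : V → Finset V) (ω : V → V → ℝ) (x : V) : ℝ := ∑ y ∈ nbr x, ω x y

/-- `ν^ω(x)`, the sum of the reciprocals of the weights of edges incident to `x`. -/
def nu (nbr : V → Finset V) (ω : V → V → ℝ) (x : V) : ℝ := ∑ y ∈ nbr x, (ω x y)⁻¹

/-- `(L_Y^ω f)(x)`. -/
def lap (nbr : V → Finset V) (ω : V → V → ℝ) (f : V → ℝ) (x : V) : ℝ :=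
  (mu nbr ω x)⁻¹ * ∑ y ∈ nbr x, ω x y * (f y - f x)

/-- space-averaged norm `‖f‖_{p,A}` for a real exponent `p`. -/
def nrm (A : Finset V) (p : ℝ) (f : V → ℝ) : ℝ :=
  ((A.card : ℝ)⁻¹ * ∑ x ∈ A, |f x| ^ p) ^ (1 / p)

/-- weighted space-averaged norm `‖f‖_{p,A,φ}` for a real exponent `p`. -/
def nrmW (A : Finset V) (p : ℝ) (φ : V → ℝ) (f : V → ℝ) : ℝ :=
  ((A.card : ℝ)⁻¹ * ∑ x ∈ A, |f x| ^ p * φ x) ^ (1 / p)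

/-- space-averaged norm `‖f‖_{p,A}` for an extended exponent `p ∈ (0,∞]`;
for `p = ∞` this is the maximum of `|f|` over `A`. -/
def nrmE (A : Finset V) (p : ℝ≥0∞) (f : V → ℝ) : ℝ :=
  if p = ⊤ then sSup ((fun x => |f x|) '' (A : Set V)) else nrm A p.toReal f

/-- weighted average `(u)_{A,π}`. -/
def wavg (A : Finset V) (π : V → ℝ) (u : V → ℝ) : ℝ :=
  (∑ x ∈ A, π x * u x) / ∑ x ∈ A, π x

open Classical in
/-- relative internal boundary `∂_B A`. -/
def relBdry (G : SimpleGraph V) (B A : Finset V) : Finset V :=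
  A.filter fun z => ∃ y ∈ B, y ∉ A ∧ G.Adj z y

open Classical in
/-- internal boundary `∂B`. -/
def intBdry (G : SimpleGraph V) (B : Finset V) : Finset V :=
  B.filter fun z => ∃ y, y ∉ B ∧ G.Adj z y

open Classical in
/-- Dirichlet sum `Σ_{x,y ∈ B, x∼y} ω(x,y) (u(x)-u(y))²`. -/
def dSum (G : SimpleGraph V) (ω : V → V → ℝ) (B : Finset V) (u : V → ℝ) : ℝ :=
  ∑ x ∈ B, ∑ y ∈ B, if G.Adj x y then ω x y * (u x - u y) ^ 2 else 0

/-- `E^ω_{η²}(u) = (1/2) Σ_{x,y} η(x)² ω(x,y) (u(y)-u(x))²`. -/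
def energySq (ω : V → V → ℝ) (η u : V → ℝ) : ℝ :=
  (1 / 2) * ∑' x, ∑' y, η x ^ 2 * ω x y * (u y - u x) ^ 2

/-- `E^{ω,η}(u) = (1/2) Σ_{x,y} min(η(x)²,η(y)²) ω(x,y) (u(y)-u(x))²`. -/
def energyMin (ω : V → V → ℝ) (η u : V → ℝ) : ℝ :=
  (1 / 2) * ∑' x, ∑' y, min (η x ^ 2) (η y ^ 2) * ω x y * (u y - u x) ^ 2

/-- `‖∇η‖_{ℓ∞(E)}`, the supremum of `|η(y)-η(x)|` over edges `{x,y}`. -/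
def gradSup (G : SimpleGraph V) (η : V → ℝ) : ℝ :=
  sSup {r : ℝ | ∃ x y, G.Adj x y ∧ r = |η y - η x|}

/-- `u` is caloric on `I × B`: `∂_t u = L_Y^ω u` on `I × B`. -/
def Caloric (nbr : V → Finset V) (ω : V → V → ℝ) (I : Set ℝ) (B : Set V)
    (u : ℝ → V → ℝ) : Prop :=
  ∀ x ∈ B, ∀ t ∈ I, HasDerivAt (fun s => u s x) (lap nbr ω (u t) x) t

/-- `u` is sub-caloric on `I × B`: `∂_t u ≤ L_Y^ω u` on `I × B`. -/
def SubCaloric (nbr : V → Finset V) (ω : V → V → ℝ) (I : Set ℝ) (B : Set V)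
    (u : ℝ → V → ℝ) : Prop :=
  ∀ x ∈ B, ∀ t ∈ I, ∃ d, HasDerivAt (fun s => u s x) d t ∧ d ≤ lap nbr ω (u t) x

/-- `u` is super-caloric on `I × B`: `∂_t u ≥ L_Y^ω u` on `I × B`. -/
def SuperCaloric (nbr : V → Finset V) (ω : V → V → ℝ) (I : Set ℝ) (B : Set V)
    (u : ℝ → V → ℝ) : Prop :=
  ∀ x ∈ B, ∀ t ∈ I, ∃ d, HasDerivAt (fun s => u s x) d t ∧ lap nbr ω (u t) x ≤ d

/-- space-time norm `‖u‖_{p,[a,b]×B,φ}`. -/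
def nrmST (a b : ℝ) (B : Finset V) (p : ℝ) (φ : V → ℝ) (u : ℝ → V → ℝ) : ℝ :=
  ((b - a)⁻¹ * ∫ t in a..b, nrmW B p φ (u t) ^ p) ^ (1 / p)

end RCM

/-! Test the differential inequality against `η² u^(2 α - 1)`: the time derivative of the mass of
`(η u^α)²` is at least `2 α ∑ η² u^(2 α - 1) μ L u`, and summation by parts turns this sum into one
over the edges of `(q - p) (a² p^(2 α - 1) - b² q^(2 α - 1))`, where `p, q` and `a, b` are the
values of `u` and `η` at the two endpoints. For `p ≤ q` this term splits into `a² J`, where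
`J = (q - p) (p^(2 α - 1) - q^(2 α - 1)) ≥ 0`, and the cross term `(a² - b²) (q - p) q^(2 α - 1)`.
Cauchy–Schwarz for `q^α - p^α = α ∫ t^(α - 1)` bounds `(q^α - p^α)²` by a multiple of `J`; the
oscillation bound `b² ≤ K a²` and Young's inequality absorb the cross term into `a² J` at the cost
of a multiple of `K (a - b)² q^(2 α)`. Hence the derivative of the mass dominates a multiple of the
energy minus a multiple of `K ‖∇η‖²` times the mass of `u^(2 α)`. Integrating against `ζ` from `s`
to `s₂`, where `ζ` vanishes, bounds the energy for `s = s₁` and the mass at time `s` for general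
`s`. -/

namespace RCM

section RealInequalities

theorem sq_intervalIntegral_le {f : ℝ → ℝ} {a b : ℝ} (hab : a ≤ b)
    (hf : IntervalIntegrable f volume a b)
    (hf2 : IntervalIntegrable (fun t => f t ^ 2) volume a b) :
    (∫ t in a..b, f t) ^ 2 ≤ (b - a) * ∫ t in a..b, f t ^ 2 := by
  rcases hab.eq_or_lt with rfl | hlt
  · simp
  set m := ∫ t in a..b, f t
  have hnonneg : 0 ≤ ∫ t in a..b, ((b - a) * f t - m) ^ 2 :=
    intervalIntegral.integral_nonneg hab fun t _ => sq_nonneg _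
  have hexpand : ∫ t in a..b, ((b - a) * f t - m) ^ 2 =
      (b - a) * ((b - a) * (∫ t in a..b, f t ^ 2) - m ^ 2) := by
    calc ∫ t in a..b, ((b - a) * f t - m) ^ 2
        = ∫ t in a..b, ((b - a) ^ 2 * f t ^ 2 - 2 * (b - a) * m * f t + m ^ 2) := by
          congr with t
          ring
      _ = (b - a) ^ 2 * (∫ t in a..b, f t ^ 2) - 2 * (b - a) * m * m + (b - a) * m ^ 2 := by
          rw [intervalIntegral.integral_add ((hf2.const_mul _).sub (hf.const_mul _)) (by simp),
            intervalIntegral.integral_sub (hf2.const_mul _) (hf.const_mul _),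
            intervalIntegral.integral_const_mul, intervalIntegral.integral_const_mul,
            intervalIntegral.integral_const, smul_eq_mul]
      _ = _ := by ring
  exact sub_nonneg.1 (nonneg_of_mul_nonneg_right (hexpand ▸ hnonneg) (sub_pos.2 hlt))

theorem mul_sq_rpow_sub_rpow_le {α p q : ℝ} (hα : α < 1 / 2) (hp : 0 < p) (hpq : p ≤ q) :
    (1 - 2 * α) * (q ^ α - p ^ α) ^ 2 ≤
      α ^ 2 * ((q - p) * (p ^ (2 * α - 1) - q ^ (2 * α - 1))) := by
  rcases eq_or_ne α 0 with rfl | hα₀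
  · simp
  have hpos : ∀ t ∈ Set.uIcc p q, 0 < t := fun t ht =>
    hp.trans_le (Set.uIcc_of_le hpq ▸ ht).1
  have h0 : (0 : ℝ) ∉ Set.uIcc p q := fun h => (hpos 0 h).false
  have hsq : Set.EqOn (fun t : ℝ => (t ^ (α - 1)) ^ 2) (fun t => t ^ (2 * α - 2))
      (Set.uIcc p q) := fun t ht => by
    change (t ^ (α - 1)) ^ 2 = t ^ (2 * α - 2)
    rw [← Real.rpow_mul_natCast (hpos t ht).le]
    congr 1
    push_cast
    ring
  have hint : ∫ t in p..q, t ^ (α - 1) = (q ^ α - p ^ α) / α := by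
    rw [integral_rpow (Or.inr ⟨fun h => hα₀ (by linarith), h0⟩), sub_add_cancel]
  have hint2 : ∫ t in p..q, (t ^ (α - 1)) ^ 2 =
      (p ^ (2 * α - 1) - q ^ (2 * α - 1)) / (1 - 2 * α) := by
    rw [intervalIntegral.integral_congr hsq, integral_rpow (Or.inr ⟨by linarith, h0⟩),
      show 2 * α - 2 + 1 = 2 * α - 1 by ring, ← neg_div_neg_eq, neg_sub, neg_sub]
  have hcs := sq_intervalIntegral_le hpq
    (intervalIntegral.intervalIntegrable_rpow (r := α - 1) (Or.inr h0))
    ((intervalIntegral.intervalIntegrable_rpow (Or.inr h0)).congr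
      (hsq.symm.mono Set.uIoc_subset_uIcc))
  rw [hint, hint2, div_pow, mul_div_assoc', div_le_div_iff₀ (by positivity) (by linarith)] at hcs
  linarith

theorem rpow_sub_rpow_le_mul_of_nonpos {r p q : ℝ} (hr : r ≤ 0) (hp : 0 < p) (hpq : p ≤ q) :
    q ^ r - p ^ r ≤ r * q ^ (r - 1) * (q - p) := by
  have hderiv : ∀ t ∈ Set.Icc p q, HasDerivAt (fun t : ℝ => t ^ r) (r * t ^ (r - 1)) t :=
    fun t ht => Real.hasDerivAt_rpow_const (Or.inl (hp.trans_le ht.1).ne')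
  refine (convex_Icc p q).image_sub_le_mul_sub_of_deriv_le
    (fun t ht => (hderiv t ht).continuousAt.continuousWithinAt)
    (fun t ht => (hderiv t (interior_subset ht)).differentiableAt.differentiableWithinAt)
    (fun t ht => ?_) p (Set.left_mem_Icc.2 hpq) q (Set.right_mem_Icc.2 hpq) hpq
  have ht := interior_subset ht
  rw [(hderiv t ht).deriv]
  exact mul_le_mul_of_nonpos_left
    (Real.rpow_le_rpow_of_nonpos (hp.trans_le ht.1) ht.2 (by linarith)) hr

theorem mul_sq_sub_mul_rpow_le {α p q : ℝ} (hα : α ≤ 1 / 2) (hp : 0 < p) (hpq : p ≤ q) :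
    (1 - 2 * α) * ((q - p) * q ^ (2 * α - 1)) ^ 2 ≤
      (q - p) * (p ^ (2 * α - 1) - q ^ (2 * α - 1)) * q ^ (2 * α) := by
  have hq : 0 < q := hp.trans_le hpq
  have htangent := rpow_sub_rpow_le_mul_of_nonpos (r := 2 * α - 1) (by linarith) hp hpq
  have hsplit : (q ^ (2 * α - 1)) ^ 2 = q ^ (2 * α - 1 - 1) * q ^ (2 * α) := by
    rw [← Real.rpow_mul_natCast hq.le, ← Real.rpow_add hq]
    congr 1
    push_cast
    ring
  calc (1 - 2 * α) * ((q - p) * q ^ (2 * α - 1)) ^ 2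
      = (q - p) * -((2 * α - 1) * q ^ (2 * α - 1 - 1) * (q - p)) * q ^ (2 * α) := by
        rw [mul_pow, hsplit]
        ring
    _ ≤ (q - p) * (p ^ (2 * α - 1) - q ^ (2 * α - 1)) * q ^ (2 * α) := by
        refine mul_le_mul_of_nonneg_right ?_ (Real.rpow_nonneg hq.le _)
        exact mul_le_mul_of_nonneg_left (by linarith) (sub_nonneg.2 hpq)

theorem neg_le_sq_sub_sq_mul {δ K J P Q a b : ℝ} (hδ : 0 < δ) (hK : 1 ≤ K) (hJ : 0 ≤ J)
    (hQ : δ * Q ^ 2 ≤ J * P ^ 2) (hab : b ^ 2 ≤ K * a ^ 2) :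
    -(a ^ 2 * J / 2 + 2 / δ * (K * (a - b) ^ 2 * P ^ 2)) ≤ (a ^ 2 - b ^ 2) * Q := by
  have hsum : (a + b) ^ 2 ≤ 4 * K * a ^ 2 := by
    nlinarith only [sq_nonneg (a - b), mul_le_mul_of_nonneg_right hK (sq_nonneg a), hab]
  have hQ' : Q ^ 2 ≤ J * P ^ 2 / δ := (le_div_iff₀' hδ).2 hQ
  have hsq : ((a ^ 2 - b ^ 2) * Q) ^ 2 ≤
      (a ^ 2 * J / 2 + 2 / δ * (K * (a - b) ^ 2 * P ^ 2)) ^ 2 :=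
    calc ((a ^ 2 - b ^ 2) * Q) ^ 2 = (a + b) ^ 2 * (a - b) ^ 2 * Q ^ 2 := by ring
      _ ≤ 4 * K * a ^ 2 * (a - b) ^ 2 * (J * P ^ 2 / δ) := by gcongr
      _ = 4 * (a ^ 2 * J / 2) * (2 / δ * (K * (a - b) ^ 2 * P ^ 2)) := by ring
      _ ≤ _ := four_mul_le_sq_add _ _
  exact (abs_le_of_sq_le_sq' hsq (by positivity)).1

-- The roles are `D = q ^ α - p ^ α`, `P = q ^ α`, `Q = (q - p) * q ^ (2 * α - 1)` and
-- `J = (q - p) * (p ^ (2 * α - 1) - q ^ (2 * α - 1))` for `p ≤ q`.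
theorem cutoff_energy_le_of_sq_le {α K D J P Q a b : ℝ} (hα₀ : 0 < α) (hα : α < 1 / 2)
    (hK : 1 ≤ K) (hJ : 0 ≤ J) (hDJ : (1 - 2 * α) * D ^ 2 ≤ α ^ 2 * J) (hDP : D ^ 2 ≤ P ^ 2)
    (hQJ : (1 - 2 * α) * Q ^ 2 ≤ J * P ^ 2) (hab : b ^ 2 ≤ K * a ^ 2) :
    (1 - 2 * α) / 8 * ((a ^ 2 + b ^ 2) * D ^ 2) -
        2 / (1 - 2 * α) * (K * (a - b) ^ 2 * P ^ 2) ≤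
      2 * α * (a ^ 2 * J + (a ^ 2 - b ^ 2) * Q) := by
  have hδ : 0 < 1 - 2 * α := by linarith
  set T := K * (a - b) ^ 2 * P ^ 2 with hT
  have hT0 : 0 ≤ T := by positivity
  have hcross := mul_le_mul_of_nonneg_left (neg_le_sq_sub_sq_mul hδ hK hJ hQJ hab)
    (by positivity : 0 ≤ 2 * α)
  have hsplit : 2 / (1 - 2 * α) * T = 2 * T + 2 * α * (2 / (1 - 2 * α) * T) := by
    field_simp
    ring
  have hsq : a ^ 2 + b ^ 2 ≤ 3 * a ^ 2 + 2 * (a - b) ^ 2 := by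
    nlinarith only [sq_nonneg (2 * a - b)]
  have hDT : (a - b) ^ 2 * D ^ 2 ≤ T :=
    calc (a - b) ^ 2 * D ^ 2 = 1 * (a - b) ^ 2 * D ^ 2 := by ring
      _ ≤ T := by rw [hT]; gcongr
  have henergy : (1 - 2 * α) / 8 * ((a ^ 2 + b ^ 2) * D ^ 2) ≤ α * (a ^ 2 * J) + T :=
    calc (1 - 2 * α) / 8 * ((a ^ 2 + b ^ 2) * D ^ 2)
        ≤ (1 - 2 * α) / 8 * ((3 * a ^ 2 + 2 * (a - b) ^ 2) * D ^ 2) := by gcongr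
      _ = 3 / 8 * (a ^ 2 * ((1 - 2 * α) * D ^ 2)) +
            (1 - 2 * α) / 4 * ((a - b) ^ 2 * D ^ 2) := by ring
      _ ≤ 3 / 8 * (a ^ 2 * (α ^ 2 * J)) + (1 - 2 * α) / 4 * T := by gcongr
      _ = 3 / 8 * α * (α * (a ^ 2 * J)) + (1 - 2 * α) / 4 * T := by ring
      _ ≤ 1 * (α * (a ^ 2 * J)) + 1 * T := by gcongr <;> linarith
      _ = α * (a ^ 2 * J) + T := by ring
  linarith

theorem cutoff_energy_le_of_eq_zero {α K D P Q b : ℝ} (hα₀ : 0 < α) (hα : α < 1 / 2)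
    (hK : 1 ≤ K) (hDP : D ^ 2 ≤ P ^ 2) (hQ₀ : 0 ≤ Q) (hQP : Q ≤ P ^ 2) :
    (1 - 2 * α) / 8 * (b ^ 2 * D ^ 2) - 2 / (1 - 2 * α) * (K * b ^ 2 * P ^ 2) ≤
      2 * α * (-b ^ 2 * Q) := by
  have hδ : 0 < 1 - 2 * α := by linarith
  have hD : (1 - 2 * α) / 8 * (b ^ 2 * D ^ 2) ≤ 1 * (b ^ 2 * P ^ 2) := by
    gcongr
    linarith
  have hQ : 2 * α * (b ^ 2 * Q) ≤ 1 * (b ^ 2 * P ^ 2) := by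
    gcongr
    linarith
  have hT : 2 * (1 * b ^ 2 * P ^ 2) ≤ 2 / (1 - 2 * α) * (K * b ^ 2 * P ^ 2) := by
    gcongr
    exact le_div_self zero_le_two hδ (by linarith)
  linarith

theorem edge_energy_le_of_le {α K p q a b : ℝ} (hα₀ : 0 < α) (hα : α < 1 / 2) (hK : 1 ≤ K)
    (hp : 0 < p) (hpq : p ≤ q) (hab : a ≠ 0 → b ^ 2 ≤ K * a ^ 2) :
    (1 - 2 * α) / 8 * ((a ^ 2 + b ^ 2) * (q ^ α - p ^ α) ^ 2) -
        2 / (1 - 2 * α) * (K * (a - b) ^ 2 * q ^ (2 * α)) ≤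
      2 * α * ((q - p) * (a ^ 2 * p ^ (2 * α - 1) - b ^ 2 * q ^ (2 * α - 1))) := by
  have hq : 0 < q := hp.trans_le hpq
  have hqp : 0 ≤ q - p := sub_nonneg.2 hpq
  have hanti : q ^ (2 * α - 1) ≤ p ^ (2 * α - 1) :=
    Real.rpow_le_rpow_of_nonpos hp hpq (by linarith)
  have hP : q ^ (2 * α) = (q ^ α) ^ 2 := by
    rw [mul_comm, Real.rpow_mul hq.le, Real.rpow_two]
  have hDP : (q ^ α - p ^ α) ^ 2 ≤ (q ^ α) ^ 2 :=
    pow_le_pow_left₀ (sub_nonneg.2 (Real.rpow_le_rpow hp.le hpq hα₀.le))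
      (sub_le_self _ (Real.rpow_nonneg hp.le _)) 2
  have hQP : (q - p) * q ^ (2 * α - 1) ≤ (q ^ α) ^ 2 :=
    calc (q - p) * q ^ (2 * α - 1) ≤ q * q ^ (2 * α - 1) := by gcongr; linarith
      _ = (q ^ α) ^ 2 := by rw [← hP, Real.rpow_sub_one hq.ne', mul_div_cancel₀ _ hq.ne']
  have hQJ := mul_sq_sub_mul_rpow_le hα.le hp hpq
  rw [hP] at hQJ ⊢
  rcases eq_or_ne a 0 with rfl | ha
  · have h := cutoff_energy_le_of_eq_zero (b := b) hα₀ hα hK hDP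
      (mul_nonneg hqp (Real.rpow_nonneg hq.le _)) hQP
    linarith
  · have h := cutoff_energy_le_of_sq_le hα₀ hα hK (mul_nonneg hqp (sub_nonneg.2 hanti))
      (mul_sq_rpow_sub_rpow_le hα hp hpq) hDP hQJ (hab ha)
    linarith

theorem edge_energy_le {α K p q a b : ℝ} (hα₀ : 0 < α) (hα : α < 1 / 2) (hK : 1 ≤ K)
    (hp : 0 < p) (hq : 0 < q) (hab : a ≠ 0 → b ^ 2 ≤ K * a ^ 2)
    (hba : b ≠ 0 → a ^ 2 ≤ K * b ^ 2) :
    (1 - 2 * α) / 8 * ((a ^ 2 + b ^ 2) * (q ^ α - p ^ α) ^ 2) -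
        2 / (1 - 2 * α) * (K * (a - b) ^ 2 * (p ^ (2 * α) + q ^ (2 * α))) ≤
      2 * α * ((q - p) * (a ^ 2 * p ^ (2 * α - 1) - b ^ 2 * q ^ (2 * α - 1))) := by
  have hδ : 0 < 1 - 2 * α := by linarith
  have hp' : 0 ≤ 2 / (1 - 2 * α) * (K * (a - b) ^ 2 * p ^ (2 * α)) := by positivity
  have hq' : 0 ≤ 2 / (1 - 2 * α) * (K * (a - b) ^ 2 * q ^ (2 * α)) := by positivity
  rcases le_total p q with h | h
  · linarith [edge_energy_le_of_le hα₀ hα hK hp h hab]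
  · linarith [edge_energy_le_of_le hα₀ hα hK hq h hba]

end RealInequalities

theorem cutoff_mul_add_integral_le {a b C Z : ℝ} (hab : a ≤ b) {F F' E M ζ ζ' : ℝ → ℝ}
    (hζ : ∀ t ∈ Set.Icc a b, HasDerivAt ζ (ζ' t) t)
    (hζ01 : ∀ t ∈ Set.Icc a b, 0 ≤ ζ t ∧ ζ t ≤ 1) (hζb : ζ b = 0)
    (hζ' : ∀ t ∈ Set.Icc a b, |ζ' t| ≤ Z)
    (hF : ∀ t ∈ Set.Icc a b, HasDerivAt F (F' t) t)
    (hE : ContinuousOn E (Set.Icc a b)) (hM : ContinuousOn M (Set.Icc a b)) (hC : 0 ≤ C)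
    (hF0 : ∀ t ∈ Set.Icc a b, 0 ≤ F t) (hFM : ∀ t ∈ Set.Icc a b, F t ≤ M t)
    (hF' : ∀ t ∈ Set.Icc a b, E t - C * M t ≤ F' t) :
    ζ a * F a + ∫ t in a..b, ζ t * E t ≤ (C + Z) * ∫ t in a..b, M t := by
  have hderiv : ∀ t ∈ Set.Icc a b,
      HasDerivAt (fun s => ζ s * F s) (ζ' t * F t + ζ t * F' t) t :=
    fun t ht => (hζ t ht).mul (hF t ht)
  have hlower : ∀ t ∈ Set.Icc a b,
      ζ t * E t - (C + Z) * M t ≤ ζ' t * F t + ζ t * F' t := fun t ht => by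
    obtain ⟨hζ0, hζ1⟩ := hζ01 t ht
    have hM0 : 0 ≤ M t := (hF0 t ht).trans (hFM t ht)
    have hspatial : ζ t * (E t - C * M t) ≤ ζ t * F' t :=
      mul_le_mul_of_nonneg_left (hF' t ht) hζ0
    have hmass : ζ t * (C * M t) ≤ C * M t := mul_le_of_le_one_left (mul_nonneg hC hM0) hζ1
    have htemporal : |ζ' t * F t| ≤ Z * M t := by
      rw [abs_mul, abs_of_nonneg (hF0 t ht)]
      exact mul_le_mul (hζ' t ht) (hFM t ht) (hF0 t ht) ((abs_nonneg _).trans (hζ' t ht))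
    linarith [(abs_le.1 htemporal).1]
  have hζE : ContinuousOn (fun t => ζ t * E t) (Set.Icc a b) :=
    ContinuousOn.mul (fun t ht => (hζ t ht).continuousAt.continuousWithinAt) hE
  have hCM : ContinuousOn (fun t => (C + Z) * M t) (Set.Icc a b) := hM.const_mul _
  have hftc := intervalIntegral.integral_le_sub_of_hasDeriv_right_of_le
    (φ := fun t => ζ t * E t - (C + Z) * M t) hab
    (fun t ht => (hderiv t ht).continuousAt.continuousWithinAt)
    (fun t ht => (hderiv t (Set.Ioo_subset_Icc_self ht)).hasDerivWithinAt)
    ((hζE.sub hCM).integrableOn_compact isCompact_Icc)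
    (fun t ht => hlower t (Set.Ioo_subset_Icc_self ht))
  rw [intervalIntegral.integral_sub (hζE.intervalIntegrable_of_Icc hab)
    (hCM.intervalIntegrable_of_Icc hab), intervalIntegral.integral_const_mul, hζb] at hftc
  linarith

theorem hasDerivAt_sq_mul_rpow {f : ℝ → ℝ} {d t : ℝ} (hf : HasDerivAt f d t) (hft : 0 < f t)
    (c α : ℝ) :
    HasDerivAt (fun s => (c * f s ^ α) ^ 2) (2 * α * (c ^ 2 * f t ^ (2 * α - 1) * d)) t := by
  have hpow : f t ^ (2 * α - 1) = f t ^ α * f t ^ (α - 1) := by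
    rw [← Real.rpow_add hft]
    congr 1
    ring
  refine (((hf.rpow_const (p := α) (Or.inl hft.ne')).const_mul c).fun_pow 2).congr_deriv ?_
  rw [hpow]
  push_cast
  ring

variable {V : Type*} {G : SimpleGraph V} {nbr : V → Finset V} {ω : V → V → ℝ} {A B : Finset V}
  {η : V → ℝ} {K α : ℝ}

/-- `ω` is a family of conductances on the edges of the locally finite graph `G`, whose
neighbourhoods are listed by `nbr`. As in the paper, `ω` is extended by zero to all pairs. -/
structure IsConductance (G : SimpleGraph V) (nbr : V → Finset V) (ω : V → V → ℝ) : Prop where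
  mem_nbr_iff : ∀ x y, y ∈ nbr x ↔ G.Adj x y
  symm : ∀ x y, ω x y = ω y x
  pos : ∀ x y, G.Adj x y → 0 < ω x y
  eq_zero : ∀ x y, ¬ G.Adj x y → ω x y = 0

/-- `η` is a spatial cut-off function: it is bounded by one, vanishes outside the interior of `B`,
and the ratio of the values of `η ^ 2` along an edge of its support is at most `K`. -/
structure IsCutoff (G : SimpleGraph V) (B : Finset V) (K : ℝ) (η : V → ℝ) : Prop where
  abs_le_one : ∀ x, |η x| ≤ 1
  eq_zero_of_notMem : ∀ x ∉ B, η x = 0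
  eq_zero_of_mem_intBdry : ∀ x ∈ intBdry G B, η x = 0
  one_le : 1 ≤ K
  sq_le_mul_sq : ∀ x y, G.Adj x y → η x ≠ 0 → η y ^ 2 ≤ K * η x ^ 2

/-- The mass `Σ_{x ∈ A} f(x) μ^ω(x)`, which is the norm `‖f‖_{1,A,μ^ω}` of a nonnegative `f`
without the normalization by `|A|`. -/
def mass (nbr : V → Finset V) (ω : V → V → ℝ) (A : Finset V) (f : V → ℝ) : ℝ :=
  ∑ x ∈ A, f x * mu nbr ω x

theorem nrmW_one_eq_mass_div {f : V → ℝ} (hf : ∀ x ∈ A, 0 ≤ f x) :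
    nrmW A 1 (mu nbr ω) f = mass nbr ω A f / A.card := by
  have habs : ∑ x ∈ A, |f x| * mu nbr ω x = mass nbr ω A f :=
    Finset.sum_congr rfl fun x hx => by rw [abs_of_nonneg (hf x hx)]
  simp [nrmW, habs, div_eq_inv_mul]

theorem sq_sub_le_gradSup_sq {c : ℝ} (hη : ∀ x, |η x| ≤ c) {x y : V} (h : G.Adj x y) :
    (η x - η y) ^ 2 ≤ gradSup G η ^ 2 := by
  have hbdd : BddAbove {r : ℝ | ∃ x y, G.Adj x y ∧ r = |η y - η x|} := by
    refine ⟨c + c, ?_⟩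
    rintro _ ⟨x, y, -, rfl⟩
    exact (abs_sub _ _).trans (add_le_add (hη y) (hη x))
  have hle : |η x - η y| ≤ gradSup G η := le_csSup hbdd ⟨y, x, h.symm, rfl⟩
  exact sq_le_sq.2 (hle.trans (le_abs_self _))

namespace IsConductance

theorem nonneg (hω : IsConductance G nbr ω) (x y : V) : 0 ≤ ω x y := by
  by_cases h : G.Adj x y
  · exact (hω.pos x y h).le
  · exact (hω.eq_zero x y h).ge

theorem mu_nonneg (hω : IsConductance G nbr ω) (x : V) : 0 ≤ mu nbr ω x :=
  Finset.sum_nonneg fun y _ => hω.nonneg x y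

theorem mass_mono (hω : IsConductance G nbr ω) {f g : V → ℝ} (h : ∀ x ∈ A, f x ≤ g x) :
    mass nbr ω A f ≤ mass nbr ω A g :=
  Finset.sum_le_sum fun x hx => mul_le_mul_of_nonneg_right (h x hx) (hω.mu_nonneg x)

theorem mass_nonneg (hω : IsConductance G nbr ω) {f : V → ℝ} (h : ∀ x ∈ A, 0 ≤ f x) :
    0 ≤ mass nbr ω A f :=
  Finset.sum_nonneg fun x hx => mul_nonneg (h x hx) (hω.mu_nonneg x)

theorem energySq_nonneg (hω : IsConductance G nbr ω) (η f : V → ℝ) : 0 ≤ energySq ω η f :=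
  mul_nonneg one_half_pos.le <| tsum_nonneg fun x => tsum_nonneg fun y =>
    mul_nonneg (mul_nonneg (sq_nonneg _) (hω.nonneg x y)) (sq_nonneg _)

theorem sum_nbr_eq_sum (hω : IsConductance G nbr ω) {x : V} (hx : ∀ y, G.Adj x y → y ∈ B)
    (f : V → ℝ) : ∑ y ∈ nbr x, ω x y * f y = ∑ y ∈ B, ω x y * f y := by
  refine Finset.sum_subset (fun y hy => hx y ((hω.mem_nbr_iff x y).1 hy)) fun y _ hy => ?_
  rw [hω.eq_zero x y fun h => hy ((hω.mem_nbr_iff x y).2 h), zero_mul]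

theorem sum_le_mu (hω : IsConductance G nbr ω) (B : Finset V) (x : V) :
    ∑ y ∈ B, ω x y ≤ mu nbr ω x := by
  classical
  rw [← Finset.sum_filter_of_ne fun y _ => (not_imp_comm.1 (hω.eq_zero x y))]
  exact Finset.sum_le_sum_of_subset_of_nonneg
    (fun y hy => (hω.mem_nbr_iff x y).2 (Finset.mem_filter.1 hy).2) fun y _ _ => hω.nonneg x y

theorem mu_mul_lap (hω : IsConductance G nbr ω) (f : V → ℝ) (x : V) :
    mu nbr ω x * lap nbr ω f x = ∑ y ∈ nbr x, ω x y * (f y - f x) := by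
  rcases (nbr x).eq_empty_or_nonempty with h | h
  · simp [mu, lap, h]
  · have hmu : 0 < mu nbr ω x :=
      Finset.sum_pos (fun y hy => hω.pos x y ((hω.mem_nbr_iff x y).1 hy)) h
    rw [lap, mul_inv_cancel_left₀ hmu.ne']

theorem sum_sum_symm (hω : IsConductance G nbr ω) (B : Finset V) (f : V → V → ℝ) :
    ∑ x ∈ B, ∑ y ∈ B, ω x y * (f x y + f y x) = 2 * ∑ x ∈ B, ∑ y ∈ B, ω x y * f x y := by
  have hswap : ∑ x ∈ B, ∑ y ∈ B, ω x y * f y x = ∑ x ∈ B, ∑ y ∈ B, ω x y * f x y := by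
    rw [Finset.sum_comm]
    simp only [hω.symm]
  simp only [mul_add, Finset.sum_add_distrib, hswap]
  ring

theorem sum_sum_le_two_mul_mass (hω : IsConductance G nbr ω) {g : V → ℝ}
    (hg : ∀ x ∈ B, 0 ≤ g x) :
    ∑ x ∈ B, ∑ y ∈ B, ω x y * (g x + g y) ≤ 2 * mass nbr ω B g := by
  rw [hω.sum_sum_symm B fun x _ => g x]
  refine mul_le_mul_of_nonneg_left (Finset.sum_le_sum fun x hx => ?_) zero_le_two
  rw [← Finset.sum_mul, mul_comm]
  exact mul_le_mul_of_nonneg_left (hω.sum_le_mu B x) (hg x hx)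

theorem sum_mul_lap_eq (hω : IsConductance G nbr ω) {φ : V → ℝ}
    (hφ : ∀ x y, φ x ≠ 0 → G.Adj x y → y ∈ B) (f : V → ℝ) :
    ∑ x ∈ B, φ x * (mu nbr ω x * lap nbr ω f x) =
      1 / 2 * ∑ x ∈ B, ∑ y ∈ B, ω x y * ((f y - f x) * (φ x - φ y)) := by
  have hflux : ∀ x, φ x * (mu nbr ω x * lap nbr ω f x) =
      ∑ y ∈ B, ω x y * (φ x * (f y - f x)) := fun x => by
    by_cases hx : φ x = 0
    · simp [hx]
    · rw [hω.mu_mul_lap, hω.sum_nbr_eq_sum fun y => hφ x y hx, Finset.mul_sum]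
      exact Finset.sum_congr rfl fun y _ => mul_left_comm _ _ _
  have hsymm := hω.sum_sum_symm B fun x y => φ x * (f y - f x)
  simp only [hflux, show ∀ x y, (f y - f x) * (φ x - φ y) =
    φ x * (f y - f x) + φ y * (f x - f y) from fun x y => by ring, hsymm]
  ring

end IsConductance

namespace IsCutoff

theorem mem_of_adj (hη : IsCutoff G B K η) {x y : V} (hx : η x ≠ 0) (h : G.Adj x y) : y ∈ B := by
  by_contra hy
  have hxB : x ∈ B := not_imp_comm.1 (hη.eq_zero_of_notMem x) hx
  exact hx (hη.eq_zero_of_mem_intBdry x (by simpa [intBdry, hxB] using ⟨y, hy, h⟩))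

theorem energySq_eq_sum (hη : IsCutoff G B K η) (hω : IsConductance G nbr ω) (f : V → ℝ) :
    energySq ω η f =
      1 / 4 * ∑ x ∈ B, ∑ y ∈ B, ω x y * ((η x ^ 2 + η y ^ 2) * (f y - f x) ^ 2) := by
  have hfinite : energySq ω η f =
      1 / 2 * ∑ x ∈ B, ∑ y ∈ B, ω x y * (η x ^ 2 * (f y - f x) ^ 2) := by
    rw [energySq, tsum_eq_sum (s := B) fun x hx => by simp [hη.eq_zero_of_notMem x hx]]
    congr 1
    refine Finset.sum_congr rfl fun x _ => ?_
    rw [tsum_eq_sum (s := B) fun y hy => ?_]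
    · exact Finset.sum_congr rfl fun y _ => by ring
    · by_cases hx : η x = 0
      · simp [hx]
      · simp [hω.eq_zero x y fun h => hy (hη.mem_of_adj hx h)]
  have hsymm := hω.sum_sum_symm B fun x y => η x ^ 2 * (f y - f x) ^ 2
  rw [hfinite]
  simp only [show ∀ x y, (η x ^ 2 + η y ^ 2) * (f y - f x) ^ 2 =
    η x ^ 2 * (f y - f x) ^ 2 + η y ^ 2 * (f x - f y) ^ 2 from fun x y => by ring, hsymm]
  ring

theorem weight_mul_edge_energy_le (hη : IsCutoff G B K η) (hω : IsConductance G nbr ω)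
    (hα₀ : 0 < α) (hα : α < 1 / 2) {f : V → ℝ} {x y : V} (hx : 0 < f x) (hy : 0 < f y) :
    (1 - 2 * α) / 8 * (ω x y * ((η x ^ 2 + η y ^ 2) * (f y ^ α - f x ^ α) ^ 2)) -
        2 / (1 - 2 * α) * (K * gradSup G η ^ 2) *
          (ω x y * (f x ^ (2 * α) + f y ^ (2 * α))) ≤
      2 * α * (ω x y * ((f y - f x) *
        (η x ^ 2 * f x ^ (2 * α - 1) - η y ^ 2 * f y ^ (2 * α - 1)))) := by
  by_cases h : G.Adj x y
  · have hδ : 0 < 1 - 2 * α := by linarith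
    have hK := zero_le_one.trans hη.one_le
    have hsq := sq_sub_le_gradSup_sq hη.abs_le_one h
    have hgrad : 2 / (1 - 2 * α) * (K * (η x - η y) ^ 2 * (f x ^ (2 * α) + f y ^ (2 * α))) ≤
        2 / (1 - 2 * α) * (K * gradSup G η ^ 2 * (f x ^ (2 * α) + f y ^ (2 * α))) := by
      gcongr ?_ * (?_ * ?_ * ?_)
    have hedge := edge_energy_le hα₀ hα hη.one_le hx hy (hη.sq_le_mul_sq x y h)
      (hη.sq_le_mul_sq y x h.symm)
    linarith [mul_le_mul_of_nonneg_left ((sub_le_sub_left hgrad _).trans hedge) (hω.nonneg x y)]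
  · simp [hω.eq_zero x y h]

-- The Laplacian of `f` is tested against `η ^ 2 * f ^ (2 * α - 1)`.
theorem energySq_sub_mass_le (hη : IsCutoff G B K η) (hω : IsConductance G nbr ω)
    (hα₀ : 0 < α) (hα : α < 1 / 2) {f : V → ℝ} (hf : ∀ x ∈ B, 0 < f x) :
    (1 - 2 * α) / 4 * energySq ω η (fun x => f x ^ α) -
        2 / (1 - 2 * α) * (K * gradSup G η ^ 2) * mass nbr ω B (fun x => f x ^ (2 * α)) ≤
      2 * α * ∑ x ∈ B, η x ^ 2 * f x ^ (2 * α - 1) * (mu nbr ω x * lap nbr ω f x) := by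
  have hsum := Finset.sum_le_sum fun x (hx : x ∈ B) => Finset.sum_le_sum fun y (hy : y ∈ B) =>
    hη.weight_mul_edge_energy_le hω hα₀ hα (hf x hx) (hf y hy)
  simp only [Finset.sum_sub_distrib, ← Finset.mul_sum] at hsum
  have hcoef : 0 ≤ 2 / (1 - 2 * α) * (K * gradSup G η ^ 2) :=
    mul_nonneg (div_nonneg zero_le_two (by linarith))
      (mul_nonneg (zero_le_one.trans hη.one_le) (sq_nonneg _))
  have hmass := mul_le_mul_of_nonneg_left (hω.sum_sum_le_two_mul_mass (B := B)
    (g := fun x => f x ^ (2 * α)) fun x hx => Real.rpow_nonneg (hf x hx).le _) hcoef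
  rw [hη.energySq_eq_sum hω,
    hω.sum_mul_lap_eq fun x y hx => hη.mem_of_adj fun h => hx (by simp [h])]
  linarith

theorem mass_sq_le_mass (hη : IsCutoff G B K η) (hω : IsConductance G nbr ω) {f : V → ℝ}
    (hf : ∀ x ∈ B, 0 ≤ f x) :
    mass nbr ω B (fun x => (η x * f x ^ α) ^ 2) ≤ mass nbr ω B (fun x => f x ^ (2 * α)) :=
  hω.mass_mono fun x hx => by
    rw [mul_pow, mul_comm 2 α, Real.rpow_mul (hf x hx), Real.rpow_two]
    exact mul_le_of_le_one_left (sq_nonneg _) ((sq_le_one_iff_abs_le_one _).2 (hη.abs_le_one x))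

end IsCutoff

namespace SuperCaloric

variable {u : ℝ → V → ℝ} {I : Set ℝ} {s₁ s₂ Z : ℝ} {ζ : ℝ → ℝ}

theorem mono {J : Set ℝ} {S : Set V} (h : SuperCaloric nbr ω I S u) (hJ : J ⊆ I) :
    SuperCaloric nbr ω J S u :=
  fun x hx t ht => h x hx t (hJ ht)

theorem continuousOn_rpow {S : Set V} (h : SuperCaloric nbr ω I S u)
    (hu : ∀ t ∈ I, ∀ x ∈ S, 0 < u t x) (p : ℝ) {x : V} (hx : x ∈ S) :
    ContinuousOn (fun t => u t x ^ p) I := by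
  refine ContinuousOn.rpow_const (fun t ht => ?_) fun t ht => Or.inl (hu t ht x hx).ne'
  obtain ⟨d, hd, -⟩ := h x hx t ht
  exact hd.continuousAt.continuousWithinAt

theorem continuousOn_mass_rpow (h : SuperCaloric nbr ω I B u)
    (hu : ∀ t ∈ I, ∀ x ∈ B, 0 < u t x) (p : ℝ) :
    ContinuousOn (fun t => mass nbr ω B fun x => u t x ^ p) I :=
  continuousOn_finsetSum _ fun _ hx => (h.continuousOn_rpow hu p hx).mul continuousOn_const

theorem continuousOn_energySq_rpow (h : SuperCaloric nbr ω I B u)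
    (hω : IsConductance G nbr ω) (hη : IsCutoff G B K η)
    (hu : ∀ t ∈ I, ∀ x ∈ B, 0 < u t x) (p : ℝ) :
    ContinuousOn (fun t => energySq ω η fun x => u t x ^ p) I := by
  simp only [hη.energySq_eq_sum hω]
  exact continuousOn_const.mul <| continuousOn_finsetSum _ fun x hx =>
    continuousOn_finsetSum _ fun y hy => continuousOn_const.mul <| continuousOn_const.mul <|
      ((h.continuousOn_rpow hu p hy).sub (h.continuousOn_rpow hu p hx)).pow 2

theorem exists_hasDerivAt_mass (h : SuperCaloric nbr ω I B u) (hω : IsConductance G nbr ω)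
    (hη : IsCutoff G B K η) (hα₀ : 0 < α) (hα : α < 1 / 2) {t : ℝ} (ht : t ∈ I)
    (hu : ∀ x ∈ B, 0 < u t x) :
    ∃ F', HasDerivAt (fun s => mass nbr ω B fun x => (η x * u s x ^ α) ^ 2) F' t ∧
      (1 - 2 * α) / 4 * energySq ω η (fun x => u t x ^ α) -
        2 / (1 - 2 * α) * (K * gradSup G η ^ 2) * mass nbr ω B (fun x => u t x ^ (2 * α)) ≤
        F' := by
  choose! d hd hlap using fun x hx => h x hx t ht
  refine ⟨_, HasDerivAt.fun_sum fun x hx =>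
    (hasDerivAt_sq_mul_rpow (hd x hx) (hu x hx) (η x) α).mul_const (mu nbr ω x),
    (hη.energySq_sub_mass_le hω hα₀ hα hu).trans ?_⟩
  rw [Finset.mul_sum]
  refine Finset.sum_le_sum fun x hx => ?_
  have hcoef : 0 ≤ 2 * α * (η x ^ 2 * u t x ^ (2 * α - 1)) * mu nbr ω x :=
    mul_nonneg (mul_nonneg (by linarith)
      (mul_nonneg (sq_nonneg _) (Real.rpow_nonneg (hu x hx).le _))) (hω.mu_nonneg x)
  linarith [mul_le_mul_of_nonneg_left (hlap x hx) hcoef]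

theorem cutoff_mul_mass_add_integral_energySq_le
    (h : SuperCaloric nbr ω (Set.Icc s₁ s₂) B u) (hω : IsConductance G nbr ω)
    (hη : IsCutoff G B K η) (hα₀ : 0 < α) (hα : α < 1 / 2) (hs : s₁ ≤ s₂)
    (hu : ∀ t ∈ Set.Icc s₁ s₂, ∀ x ∈ B, 0 < u t x) (hζ : Differentiable ℝ ζ)
    (hζ01 : ∀ t ∈ Set.Icc s₁ s₂, 0 ≤ ζ t ∧ ζ t ≤ 1) (hζs₂ : ζ s₂ = 0)
    (hZ : ∀ t ∈ Set.Icc s₁ s₂, |deriv ζ t| ≤ Z) :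
    ζ s₁ * mass nbr ω B (fun x => (η x * u s₁ x ^ α) ^ 2) +
        (1 - 2 * α) / 4 * ∫ t in s₁..s₂, ζ t * energySq ω η (fun x => u t x ^ α) ≤
      2 / (1 - 2 * α) * (K * gradSup G η ^ 2 + Z) *
        ∫ t in s₁..s₂, mass nbr ω B fun x => u t x ^ (2 * α) := by
  have hδ : 0 < 1 - 2 * α := by linarith
  have hK : 0 ≤ K := zero_le_one.trans hη.one_le
  have hZ0 : 0 ≤ Z := (abs_nonneg _).trans (hZ s₁ (Set.left_mem_Icc.2 hs))
  have hM0 : ∀ t ∈ Set.Icc s₁ s₂, 0 ≤ mass nbr ω B fun x => u t x ^ (2 * α) := fun t ht =>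
    hω.mass_nonneg fun x hx => Real.rpow_nonneg (hu t ht x hx).le _
  choose! F' hF hF' using fun t (ht : t ∈ Set.Icc s₁ s₂) =>
    h.exists_hasDerivAt_mass hω hη hα₀ hα ht (hu t ht)
  have hcutoff := cutoff_mul_add_integral_le hs (fun t _ => (hζ t).hasDerivAt) hζ01 hζs₂ hZ hF
    ((h.continuousOn_energySq_rpow hω hη hu α).const_mul _)
    (h.continuousOn_mass_rpow hu (2 * α)) (by positivity)
    (fun t _ => hω.mass_nonneg fun x _ => sq_nonneg _)
    (fun t ht => hη.mass_sq_le_mass hω fun x hx => (hu t ht x hx).le) hF'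
  simp only [mul_left_comm (ζ _), intervalIntegral.integral_const_mul] at hcutoff
  refine hcutoff.trans (mul_le_mul_of_nonneg_right ?_ (intervalIntegral.integral_nonneg hs hM0))
  rw [mul_add]
  gcongr
  exact le_mul_of_one_le_left hZ0 ((one_le_div hδ).2 (by linarith))

theorem integral_cutoff_mul_energySq_le
    (h : SuperCaloric nbr ω (Set.Icc s₁ s₂) B u) (hω : IsConductance G nbr ω)
    (hη : IsCutoff G B K η) (hα₀ : 0 < α) (hα : α < 1 / 2) (hs : s₁ ≤ s₂)
    (hu : ∀ t ∈ Set.Icc s₁ s₂, ∀ x ∈ B, 0 < u t x) (hζ : Differentiable ℝ ζ)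
    (hζ01 : ∀ t ∈ Set.Icc s₁ s₂, 0 ≤ ζ t ∧ ζ t ≤ 1) (hζs₂ : ζ s₂ = 0)
    (hZ : ∀ t ∈ Set.Icc s₁ s₂, |deriv ζ t| ≤ Z) :
    ∫ t in s₁..s₂, ζ t * energySq ω η (fun x => u t x ^ α) ≤
      8 / (1 - 2 * α) ^ 2 * (K * gradSup G η ^ 2 + Z) *
        ∫ t in s₁..s₂, mass nbr ω B fun x => u t x ^ (2 * α) := by
  have hδ : 0 < 1 - 2 * α := by linarith
  have hmass : 0 ≤ ζ s₁ * mass nbr ω B (fun x => (η x * u s₁ x ^ α) ^ 2) :=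
    mul_nonneg (hζ01 s₁ (Set.left_mem_Icc.2 hs)).1 (hω.mass_nonneg fun x _ => sq_nonneg _)
  have henergy := (le_add_of_nonneg_left hmass).trans
    (h.cutoff_mul_mass_add_integral_energySq_le hω hη hα₀ hα hs hu hζ hζ01 hζs₂ hZ)
  refine le_of_mul_le_mul_left (henergy.trans_eq ?_) (by positivity : 0 < (1 - 2 * α) / 4)
  field_simp
  ring

theorem cutoff_mul_mass_le
    (h : SuperCaloric nbr ω (Set.Icc s₁ s₂) B u) (hω : IsConductance G nbr ω)
    (hη : IsCutoff G B K η) (hα₀ : 0 < α) (hα : α < 1 / 2)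
    (hu : ∀ t ∈ Set.Icc s₁ s₂, ∀ x ∈ B, 0 < u t x) (hζ : Differentiable ℝ ζ)
    (hζ01 : ∀ t ∈ Set.Icc s₁ s₂, 0 ≤ ζ t ∧ ζ t ≤ 1) (hζs₂ : ζ s₂ = 0)
    (hZ : ∀ t ∈ Set.Icc s₁ s₂, |deriv ζ t| ≤ Z) {s : ℝ} (hs : s ∈ Set.Icc s₁ s₂) :
    ζ s * mass nbr ω B (fun x => (η x * u s x ^ α) ^ 2) ≤
      2 / (1 - 2 * α) * (K * gradSup G η ^ 2 + Z) *
        ∫ t in s₁..s₂, mass nbr ω B fun x => u t x ^ (2 * α) := by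
  have hδ : 0 < 1 - 2 * α := by linarith
  have hK : 0 ≤ K := zero_le_one.trans hη.one_le
  have hZ0 : 0 ≤ Z := (abs_nonneg _).trans (hZ s hs)
  have hM0 : ∀ t ∈ Set.Icc s₁ s₂, 0 ≤ mass nbr ω B fun x => u t x ^ (2 * α) := fun t ht =>
    hω.mass_nonneg fun x hx => Real.rpow_nonneg (hu t ht x hx).le _
  have hsub : Set.Icc s s₂ ⊆ Set.Icc s₁ s₂ := Set.Icc_subset_Icc_left hs.1
  have henergy : 0 ≤ (1 - 2 * α) / 4 *
      ∫ t in s..s₂, ζ t * energySq ω η (fun x => u t x ^ α) :=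
    mul_nonneg (by positivity) <| intervalIntegral.integral_nonneg hs.2 fun t ht =>
      mul_nonneg (hζ01 t (hsub ht)).1 (hω.energySq_nonneg _ _)
  have hmono : ∫ t in s..s₂, mass nbr ω B (fun x => u t x ^ (2 * α)) ≤
      ∫ t in s₁..s₂, mass nbr ω B fun x => u t x ^ (2 * α) :=
    intervalIntegral.integral_mono_interval hs.1 hs.2 le_rfl
      ((ae_restrict_mem measurableSet_Ioc).mono fun t ht => hM0 t (Set.Ioc_subset_Icc_self ht))
      ((h.continuousOn_mass_rpow hu (2 * α)).intervalIntegrable_of_Icc (hs.1.trans hs.2))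
  refine (le_add_of_nonneg_right henergy).trans <|
    ((h.mono hsub).cutoff_mul_mass_add_integral_energySq_le hω hη hα₀ hα hs.2
      (fun t ht => hu t (hsub ht)) hζ (fun t ht => hζ01 t (hsub ht)) hζs₂
      fun t ht => hZ t (hsub ht)).trans ?_
  gcongr

end SuperCaloric

end RCM

open RCM in
theorem parabolic_energy_estimates_supercaloric_general
    {V : Type*} {G : SimpleGraph V} {nbr : V → Finset V} {ω : V → V → ℝ}
    (hω : IsConductance G nbr ω) {s₁ s₂ : ℝ} (hs : s₁ ≤ s₂) {B : Finset V} (hB : B.Nonempty)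
    {K : ℝ} {η : V → ℝ} (hη : IsCutoff G B K η) {ζ : ℝ → ℝ} (hζC1 : ContDiff ℝ 1 ζ)
    (hζ01 : ∀ t ∈ Set.Icc s₁ s₂, 0 ≤ ζ t ∧ ζ t ≤ 1) (hζs₂ : ζ s₂ = 0)
    {u : ℝ → V → ℝ} (hu : ∀ t ∈ Set.Icc s₁ s₂, ∀ x ∈ B, 0 < u t x)
    (hsuper : SuperCaloric nbr ω (Set.Icc s₁ s₂) (B : Set V) u)
    {α : ℝ} (hα₀ : 0 < α) (hα : α < 1 / 2) :
    ((∫ t in s₁..s₂, ζ t * (energySq ω η (fun x => u t x ^ α) / (B.card : ℝ))) ≤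
      8 / (1 - 2 * α) ^ 2 *
        (K * gradSup G η ^ 2 + sSup ((fun t => |deriv ζ t|) '' Set.Icc s₁ s₂)) *
        ∫ t in s₁..s₂, nrmW B 1 (mu nbr ω) (fun x => u t x ^ (2 * α))) ∧
    (sSup ((fun t => ζ t * nrmW B 1 (mu nbr ω) (fun x => (η x * u t x ^ α) ^ 2)) ''
        Set.Icc s₁ s₂) ≤
      16 / (1 - 2 * α) *
        (K * gradSup G η ^ 2 + sSup ((fun t => |deriv ζ t|) '' Set.Icc s₁ s₂)) *
        ∫ t in s₁..s₂, nrmW B 1 (mu nbr ω) (fun x => u t x ^ (2 * α))) := by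
  have hcard : (0 : ℝ) < B.card := mod_cast hB.card_pos
  have hζ := hζC1.differentiable one_ne_zero
  have hZ : ∀ t ∈ Set.Icc s₁ s₂, |deriv ζ t| ≤ sSup ((fun t => |deriv ζ t|) '' Set.Icc s₁ s₂) :=
    fun t ht => le_csSup (isCompact_Icc.image hζC1.continuous_deriv_one.abs).bddAbove ⟨t, ht, rfl⟩
  have hmass : ∫ t in s₁..s₂, nrmW B 1 (mu nbr ω) (fun x => u t x ^ (2 * α)) =
      (∫ t in s₁..s₂, mass nbr ω B fun x => u t x ^ (2 * α)) / B.card := by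
    rw [← intervalIntegral.integral_div]
    exact intervalIntegral.integral_congr fun t ht => nrmW_one_eq_mass_div fun x hx =>
      Real.rpow_nonneg (hu t (Set.uIcc_of_le hs ▸ ht) x hx).le _
  rw [hmass, mul_div_assoc', mul_div_assoc']
  refine ⟨?_, csSup_le ((Set.nonempty_Icc.2 hs).image _) ?_⟩
  · simp only [mul_div_assoc', intervalIntegral.integral_div]
    exact (div_le_div_iff_of_pos_right hcard).2
      (hsuper.integral_cutoff_mul_energySq_le hω hη hα₀ hα hs hu hζ hζ01 hζs₂ hZ)
  · rintro _ ⟨s, hsI, rfl⟩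
    dsimp only
    have hle := hsuper.cutoff_mul_mass_le hω hη hα₀ hα hu hζ hζ01 hζs₂ hZ hsI
    have hnonneg := mul_nonneg (hζ01 s hsI).1
      (hω.mass_nonneg (A := B) (f := fun x => (η x * u s x ^ α) ^ 2) fun x _ => sq_nonneg _)
    rw [nrmW_one_eq_mass_div fun x _ => sq_nonneg _, mul_div_assoc',
      show 16 / (1 - 2 * α) = 8 * (2 / (1 - 2 * α)) by ring]
    exact (div_le_div_iff_of_pos_right hcard).2 (by linarith)

open RCM in
/-- **Parabolic energy estimates for super-caloric functions** (Lemma 4.5). -/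
theorem parabolic_energy_estimates_supercaloric
    {V : Type*} (G : SimpleGraph V) (nbr : V → Finset V)
    (hnbr : ∀ x y, y ∈ nbr x ↔ G.Adj x y)
    (ω : V → V → ℝ)
    (hsymm : ∀ x y, ω x y = ω y x)
    (hpos : ∀ x y, G.Adj x y → 0 < ω x y)
    (hzero : ∀ x y, ¬ G.Adj x y → ω x y = 0)
    (s₁ s₂ : ℝ) (hs : s₁ ≤ s₂)
    (B : Finset V) (hBconn : (G.induce (B : Set V)).Connected)
    (η : V → ℝ)
    (hηsupp : ∀ x ∉ B, η x = 0)
    (hη01 : ∀ x, 0 ≤ η x ∧ η x ≤ 1)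
    (hηbdry : ∀ x ∈ intBdry G B, η x = 0)
    (K : ℝ) (hK : 1 ≤ K)
    (hosc : ∀ x y, G.Adj x y → η x ≠ 0 → η y ^ 2 ≤ K * η x ^ 2)
    (ζ : ℝ → ℝ) (hζC1 : ContDiff ℝ 1 ζ)
    (hζ01 : ∀ t, 0 ≤ ζ t ∧ ζ t ≤ 1)
    (hζsupp : ∀ t ∉ Set.Icc s₁ s₂, ζ t = 0) (hζs₂ : ζ s₂ = 0)
    (u : ℝ → V → ℝ) (hu : ∀ t ∈ Set.Icc s₁ s₂, ∀ x, 0 < u t x)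
    (hsuper : SuperCaloric nbr ω (Set.Icc s₁ s₂) (B : Set V) u)
    (α : ℝ) (hα₀ : 0 < α) (hα : α < 1 / 2) :
    ((∫ t in s₁..s₂, ζ t * (energySq ω η (fun x => u t x ^ α) / (B.card : ℝ))) ≤
      8 / (1 - 2 * α) ^ 2 *
        (K * gradSup G η ^ 2 + sSup ((fun t => |deriv ζ t|) '' Set.Icc s₁ s₂)) *
        ∫ t in s₁..s₂, nrmW B 1 (mu nbr ω) (fun x => u t x ^ (2 * α))) ∧
    (sSup ((fun t => ζ t * nrmW B 1 (mu nbr ω) (fun x => (η x * u t x ^ α) ^ 2)) ''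
        Set.Icc s₁ s₂) ≤
      16 / (1 - 2 * α) *
        (K * gradSup G η ^ 2 + sSup ((fun t => |deriv ζ t|) '' Set.Icc s₁ s₂)) *
        ∫ t in s₁..s₂, nrmW B 1 (mu nbr ω) (fun x => u t x ^ (2 * α))) :=
  parabolic_energy_estimates_supercaloric_general ⟨hnbr, hsymm, hpos, hzero⟩ hs
    (Set.nonempty_coe_sort.1 hBconn.nonempty)
    ⟨fun x => (abs_of_nonneg (hη01 x).1).trans_le (hη01 x).2, hηsupp, hηbdry, hK, hosc⟩ hζC1
    (fun t _ => hζ01 t) hζs₂ (fun t ht x _ => hu t ht x) hsuper hα₀ hα
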